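/- Let φ(x,t) = t^p + a(x) t^q with 1 < p < q < ∞, a a nonnegative function in C^{0,α}(ℝⁿ) for some α ∈ (0,1], and assume q/p ≤ 1 + α/n. Let Ω ⊆ ℝⁿ be open, and suppose ℝⁿ∖Ω is locally uniformly infimally φ-fat with parameters c_fat > 0 and 0 < r_o ≤ 1. Fix a sign choice: let a*_{y,R} denote either a^+_{y,R} or a^-_{y,R}, used consistently, and φ*_{y,R}(t) = t^p + a*_{y,R} t^q. Then there is a constant c = c(n,p,q,c_fat) such that for every z ∈ ℝⁿ∖Ω, y ∈ ℝⁿ, 0 < r < r_o, R > 0, and u ∈ Lip_0(Ω) (extended by zero), the boundary Poincaré inequality holds: ⨍_{B(z,r)} φ*_{y,R}(|u|) dx ≤ c · (1 + a*_{y,R} · ((⨍_{B(z,r)} |r∇u|^p dx)^{1/p})^{q−p}) · ⨍_{B(z,r)} |r ∇u|^p dx. -/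

import Mathlib

open MeasureTheory Metric Set

noncomputable section

/-- Euclidean space `ℝⁿ`. -/
abbrev En (n : ℕ) : Type := EuclideanSpace ℝ (Fin n)

/-- Norm of the (a.e. defined, by Rademacher's theorem) gradient of `u` at `x`. -/
def gnorm {n : ℕ} (u : En n → ℝ) (x : En n) : ℝ := ‖fderiv ℝ u x‖

/-- Admissible test functions for the level-`t` capacity of `E` in `O`:
Lipschitz on the closure of `O`, `u ≥ t` on `E`, `u = 0` on `∂O`. -/
def Adm {n : ℕ} (E O : Set (En n)) (t : ℝ) : Set (En n → ℝ) :=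
  {u | (∃ K, LipschitzOnWith K u (closure O)) ∧ (∀ x ∈ E, t ≤ u x) ∧
    ∀ x ∈ frontier O, u x = 0}

/-- Level-`t` variational capacity with integrand `ψ` and normalization `ψm`. -/
def capLevel {n : ℕ} (ψ : En n → ℝ → ℝ) (ψm : ℝ → ℝ)
    (E O : Set (En n)) (t : ℝ) : ℝ :=
  sInf ((fun u => ∫ x in O, ψ x (gnorm u x) / ψm t) '' Adm E O t)

/-- Infimal capacity with integrand `ψ` and normalization `ψm`. -/
def capInfGen {n : ℕ} (ψ : En n → ℝ → ℝ) (ψm : ℝ → ℝ) (E O : Set (En n)) : ℝ :=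
  ⨅ t : Ioi (0 : ℝ), capLevel ψ ψm E O (t : ℝ)

/-- The double-phase integrand `φ(x,t) = t^p + a(x) t^q`. -/
def phi {n : ℕ} (a : En n → ℝ) (p q : ℝ) (x : En n) (t : ℝ) : ℝ :=
  t ^ p + a x * t ^ q

/-- `a_O^- = inf_{x ∈ O} a(x)`. -/
def aInfOn {n : ℕ} (a : En n → ℝ) (O : Set (En n)) : ℝ := sInf (a '' O)

/-- `a_O^+ = sup_{x ∈ O} a(x)`. -/
def aSupOn {n : ℕ} (a : En n → ℝ) (O : Set (En n)) : ℝ := sSup (a '' O)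

/-- `φ_O^-(t) = t^p + a_O^- t^q`. -/
def phiMinus {n : ℕ} (a : En n → ℝ) (p q : ℝ) (O : Set (En n)) (t : ℝ) : ℝ :=
  t ^ p + aInfOn a O * t ^ q

/-- Level-`t` variational capacity for the double-phase integrand. -/
def capPhiLevel {n : ℕ} (a : En n → ℝ) (p q t : ℝ) (E O : Set (En n)) : ℝ :=
  capLevel (phi a p q) (phiMinus a p q O) E O t

/-- Infimal `φ`-capacity. -/
def capPhiInf {n : ℕ} (a : En n → ℝ) (p q : ℝ) (E O : Set (En n)) : ℝ :=
  ⨅ t : Ioi (0 : ℝ), capPhiLevel a p q (t : ℝ) E O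

/-- Variational `p`-capacity. -/
def capP {n : ℕ} (p : ℝ) (E O : Set (En n)) : ℝ :=
  sInf ((fun u => ∫ x in O, gnorm u x ^ p) '' Adm E O 1)

/-- The rescaled set `{x ∈ B̄(0,1/2) : z + r x ∈ E}`. -/
def shiftedSet {n : ℕ} (E : Set (En n)) (z : En n) (r : ℝ) : Set (En n) :=
  {x ∈ closedBall (0 : En n) (1 / 2) | z + r • x ∈ E}

/-- Local uniform infimal `φ`-fatness with parameters `cfat` and `ro`. -/
def LocUnifPhiFat {n : ℕ} (a : En n → ℝ) (p q : ℝ) (E : Set (En n))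
    (cfat ro : ℝ) : Prop :=
  ∀ z ∈ E, ∀ r : ℝ, 0 < r → r < ro →
    cfat ≤ capPhiInf (fun x => a (z + r • x)) p q (shiftedSet E z r) (ball (0 : En n) 1)

/-- Local uniform `p`-fatness with parameters `cfat` and `ro`. -/
def LocUnifPFat {n : ℕ} (p : ℝ) (E : Set (En n)) (cfat ro : ℝ) : Prop :=
  ∀ z ∈ E, ∀ r : ℝ, 0 < r → r < ro →
    cfat ≤ capP p (shiftedSet E z r) (ball (0 : En n) 1)

/-- `Lip_0(Ω)`: Lipschitz functions with compact support contained in `Ω`,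
extended by zero to `ℝⁿ`. -/
def Lip0 {n : ℕ} (Ω : Set (En n)) : Set (En n → ℝ) :=
  {u | (∃ K, LipschitzWith K u) ∧ HasCompactSupport u ∧ tsupport u ⊆ Ω}

/-- Restricted centered maximal operator `M_R f(x) = sup_{0<r<R} ⨍_{B(x,r)} |f|`. -/
def maxOp {n : ℕ} (R : ℝ) (f : En n → ℝ) (x : En n) : ℝ :=
  ⨆ r : Ioo (0 : ℝ) R, ⨍ y in ball x (r : ℝ), |f y|

/-!
Letting the level tend to `0` makes the `q`-phase negligible, so the infimal `φ`-capacity is at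
most the `p`-capacity, and `φ`-fatness implies `p`-fatness. Rescale `B(z, r)` to the unit ball.
There a Lipschitz function `v` differs in `L^s` from its mean `m` by at most a multiple of
`‖∇v‖_p` whenever `n (1/p - 1/s) < 1`: the mean of `|∇v|` at the segment points `x + l (y - x)` is
estimated by interpolating between two changes of variables, one with `x` fixed and one averaging
over both `x` and `y`. If `v` vanishes on a set of large `p`-capacity, then testing the capacity
with a cutoff of `1 - v / m` bounds `|m|` by `‖∇v‖_p` too. The cases `s = p` and `s = q` of the
resulting inequality control the two phases; `q / p ≤ 1 + α / n` makes the latter admissible.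
-/

open Filter Module
open scoped ENNReal NNReal ProbabilityTheory Topology

/-! ### Averages over segments -/

lemma rpow_lintegral_mul_le {X : Type*} [MeasurableSpace X] {μ : Measure X} {w f : X → ℝ≥0∞}
    (hw : AEMeasurable w μ) (hf : AEMeasurable f μ) {q : ℝ} (hq : 1 ≤ q) :
    (∫⁻ x, w x * f x ∂μ) ^ q ≤ (∫⁻ x, w x ∂μ) ^ (q - 1) * ∫⁻ x, w x * f x ^ q ∂μ := by
  have hq0 : 0 < q := one_pos.trans_le hq
  have hq1 : 0 ≤ 1 - 1 / q := sub_nonneg.2 ((div_le_one hq0).2 hq)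
  have split : ∀ x, w x ^ (1 - 1 / q) * (w x * f x ^ q) ^ (1 / q) = w x * f x := fun x => by
    rw [ENNReal.mul_rpow_of_nonneg _ _ (by positivity), ← ENNReal.rpow_mul,
      mul_one_div_cancel hq0.ne', ENNReal.rpow_one, ← mul_assoc,
      ← ENNReal.rpow_add_of_nonneg _ _ hq1 (by positivity), sub_add_cancel, ENNReal.rpow_one]
  have holder := ENNReal.lintegral_mul_norm_pow_le hw (hw.mul (hf.pow_const q)) hq1
    (one_div_nonneg.2 hq0.le) (sub_add_cancel _ _)
  simp only [Pi.mul_apply, split] at holder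
  calc (∫⁻ x, w x * f x ∂μ) ^ q ≤ _ := ENNReal.rpow_le_rpow holder hq0.le
    _ = _ := by
      rw [ENNReal.mul_rpow_of_nonneg _ _ hq0.le, ← ENNReal.rpow_mul, ← ENNReal.rpow_mul,
        one_div_mul_cancel hq0.ne', ENNReal.rpow_one, sub_mul, one_mul,
        one_div_mul_cancel hq0.ne']

section Segments

variable {E : Type*} [NormedAddCommGroup E] [NormedSpace ℝ E]

lemma enorm_sub_le_lintegral_enorm_fderiv_lineMap {v : E → ℝ} {K : ℝ≥0} (hv : LipschitzWith K v)
    {x y : E} (hd : ∀ᵐ l ∂volume.restrict (Ioo (0 : ℝ) 1),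
      DifferentiableAt ℝ v (AffineMap.lineMap x y l)) :
    ‖v y - v x‖ₑ ≤
      ∫⁻ l in Ioo (0 : ℝ) 1, ‖fderiv ℝ v (AffineMap.lineMap x y l)‖ₑ * ‖y - x‖ₑ := by
  have hac : AbsolutelyContinuousOnInterval (v ∘ AffineMap.lineMap x y) 0 1 :=
    (hv.comp (lipschitzWith_lineMap x y)).lipschitzOnWith.absolutelyContinuousOnInterval
  have hftc : v y - v x = ∫ l in Ioo (0 : ℝ) 1, deriv (v ∘ AffineMap.lineMap x y) l := by
    rw [← integral_Ioc_eq_integral_Ioo, ← intervalIntegral.integral_of_le zero_le_one,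
      hac.integral_deriv_eq_sub]
    simp
  rw [hftc]
  refine (enorm_integral_le_lintegral_enorm _).trans (lintegral_mono_ae ?_)
  filter_upwards [hd] with l hl
  have : deriv (v ∘ AffineMap.lineMap x y) l = fderiv ℝ v (AffineMap.lineMap x y l) (y - x) :=
    (hl.hasFDerivAt.comp_hasDerivAt l AffineMap.hasDerivAt_lineMap).deriv
  rw [this]
  exact ContinuousLinearMap.le_opENorm _ _

variable [FiniteDimensional ℝ E] [MeasurableSpace E] [BorelSpace E] (μ : Measure E)
  [μ.IsAddHaarMeasure]

lemma map_add_smul_addHaar (z : E) {l : ℝ} (hl : l ≠ 0) :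
    μ.map (fun y => z + l • y) = ENNReal.ofReal |(l ^ finrank ℝ E)⁻¹| • μ := by
  rw [← Function.comp_def (z + ·) (l • ·), ← Measure.map_map (by fun_prop) (by fun_prop),
    Measure.map_addHaar_smul μ hl, Measure.map_smul, map_add_left_eq_self]

lemma map_lineMap_addHaar (x : E) {l : ℝ} (hl : l ≠ 0) :
    μ.map (fun y => AffineMap.lineMap x y l) = ENNReal.ofReal |(l ^ finrank ℝ E)⁻¹| • μ := by
  rw [← map_add_smul_addHaar μ (x - l • x) hl]
  congr 1 with y
  rw [AffineMap.lineMap_apply_module]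
  module

variable {s : Set E}

lemma map_lineMap_cond_le (hs : Convex ℝ s) (hsm : MeasurableSet s) {x : E} (hx : x ∈ s) {l : ℝ}
    (hl : 0 < l) (hl1 : l ≤ 1) :
    (μ[|s]).map (fun y => AffineMap.lineMap x y l) ≤
      ENNReal.ofReal (l ^ finrank ℝ E)⁻¹ • μ[|s] := by
  have hmeas : Measurable fun y : E => AffineMap.lineMap x y l := by fun_prop
  refine Measure.le_intro fun t ht _ => ?_
  have hsub : s ∩ (fun y => AffineMap.lineMap x y l) ⁻¹' t ⊆
      (fun y => AffineMap.lineMap x y l) ⁻¹' (s ∩ t) :=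
    fun y hy => ⟨hs.lineMap_mem hx hy.1 ⟨hl.le, hl1⟩, hy.2⟩
  have hst : μ ((fun y => AffineMap.lineMap x y l) ⁻¹' (s ∩ t)) =
      ENNReal.ofReal (l ^ finrank ℝ E)⁻¹ * μ (s ∩ t) := by
    rw [← Measure.map_apply hmeas (hsm.inter ht), map_lineMap_addHaar μ x hl.ne',
      abs_of_pos (by positivity), Measure.smul_apply, smul_eq_mul]
  rw [Measure.map_apply hmeas ht, Measure.smul_apply, smul_eq_mul, ProbabilityTheory.cond_apply hsm,
    ProbabilityTheory.cond_apply hsm, mul_left_comm, ← hst]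
  gcongr

lemma lintegral_comp_lineMap_cond_le (hs : Convex ℝ s) (hsm : MeasurableSet s) {x : E}
    (hx : x ∈ s) {l : ℝ} (hl : 0 < l) (hl1 : l ≤ 1) {f : E → ℝ≥0∞} (hf : Measurable f) :
    ∫⁻ y, f (AffineMap.lineMap x y l) ∂μ[|s] ≤
      ENNReal.ofReal (l ^ finrank ℝ E)⁻¹ * ∫⁻ y, f y ∂μ[|s] := by
  rw [← lintegral_map hf (by fun_prop), ← smul_eq_mul, ← lintegral_smul_measure]
  exact lintegral_mono' (map_lineMap_cond_le μ hs hsm hx hl hl1) le_rfl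

/-- For `l ≥ 1 / 2` this holds already for each fixed `x`; otherwise `x` and `y` trade places. -/
lemma lintegral_lintegral_comp_lineMap_cond_le (hs : Convex ℝ s) (hsm : MeasurableSet s)
    [IsProbabilityMeasure μ[|s]] {l : ℝ} (hl : 0 ≤ l) (hl1 : l ≤ 1) {f : E → ℝ≥0∞}
    (hf : Measurable f) :
    ∫⁻ x, ∫⁻ y, f (AffineMap.lineMap x y l) ∂μ[|s] ∂μ[|s] ≤ 2 ^ finrank ℝ E * ∫⁻ y, f y ∂μ[|s] := by
  have upper_half : ∀ t : ℝ, 1 / 2 ≤ t → t ≤ 1 →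
      ∫⁻ x, ∫⁻ y, f (AffineMap.lineMap x y t) ∂μ[|s] ∂μ[|s] ≤
        2 ^ finrank ℝ E * ∫⁻ y, f y ∂μ[|s] := by
    intro t ht ht1
    have ht0 : 0 < t := by linarith
    have hpow : ENNReal.ofReal (t ^ finrank ℝ E)⁻¹ ≤ 2 ^ finrank ℝ E := by
      rw [← inv_pow, ENNReal.ofReal_pow (by positivity)]
      gcongr
      exact ENNReal.ofReal_le_of_le_toReal (by simpa using inv_anti₀ (by norm_num) ht)
    refine (lintegral_mono_ae (g := fun _ => 2 ^ finrank ℝ E * ∫⁻ y, f y ∂μ[|s]) ?_).trans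
      (by simp)
    filter_upwards [ProbabilityTheory.ae_cond_mem hsm] with x hx
    exact (lintegral_comp_lineMap_cond_le μ hs hsm hx ht0 ht1 hf).trans (by gcongr)
  rcases le_total (1 / 2) l with h | h
  · exact upper_half l h hl1
  · rw [lintegral_lintegral_swap (by fun_prop)]
    simpa only [AffineMap.lineMap_apply_one_sub] using
      upper_half (1 - l) (by linarith) (by linarith)

lemma ae_lineMap_of_ae {P : E → Prop} (h : ∀ᵐ y ∂μ, P y) (x : E) {l : ℝ} (hl : l ≠ 0) :
    ∀ᵐ y ∂μ, P (AffineMap.lineMap x y l) := by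
  refine ae_of_ae_map (f := fun y => AffineMap.lineMap x y l) (by fun_prop) ?_
  rw [map_lineMap_addHaar μ x hl]
  exact Measure.ae_smul_measure h _

lemma ae_enorm_sub_le_lintegral_enorm_fderiv_lineMap {v : E → ℝ} {K : ℝ≥0}
    (hv : LipschitzWith K v) (x : E) :
    ∀ᵐ y ∂μ, ‖v y - v x‖ₑ ≤
      ∫⁻ l in Ioo (0 : ℝ) 1, ‖fderiv ℝ v (AffineMap.lineMap x y l)‖ₑ * ‖y - x‖ₑ := by
  have hd : ∀ᵐ l ∂volume.restrict (Ioo (0 : ℝ) 1), ∀ᵐ y ∂μ,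
      DifferentiableAt ℝ v (AffineMap.lineMap x y l) := by
    filter_upwards [ae_restrict_mem measurableSet_Ioo] with l hl
    exact ae_lineMap_of_ae μ hv.ae_differentiableAt x hl.1.ne'
  have hmeas : MeasurableSet {z : ℝ × E | DifferentiableAt ℝ v (AffineMap.lineMap x z.2 z.1)} :=
    (measurableSet_of_differentiableAt ℝ v).preimage (by fun_prop)
  filter_upwards [(Measure.ae_ae_comm hmeas).1 hd] with y hy
  exact enorm_sub_le_lintegral_enorm_fderiv_lineMap hv hy

/-! ### The Sobolev–Poincaré inequality on convex sets -/

lemma lintegral_Ioo_rpow_neg {σ : ℝ} (hσ : σ < 1) :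
    ∫⁻ l in Ioo (0 : ℝ) 1, ENNReal.ofReal (l ^ (-σ)) = ENNReal.ofReal (1 - σ)⁻¹ := by
  have hint : IntegrableOn (fun l : ℝ => l ^ (-σ)) (Ioo 0 1) :=
    (intervalIntegral.integrableOn_Ioo_rpow_iff one_pos).2 (by linarith)
  rw [← ofReal_integral_eq_lintegral_ofReal hint, ← integral_Ioc_eq_integral_Ioo,
    ← intervalIntegral.integral_of_le zero_le_one, integral_rpow (Or.inl (by linarith))]
  · rw [Real.one_rpow, Real.zero_rpow (by linarith), sub_zero, one_div, neg_add_eq_sub]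
  · filter_upwards [ae_restrict_mem measurableSet_Ioo] with l hl using Real.rpow_nonneg hl.1.le _

lemma ennreal_rpow_sub_one_mul_self (x : ℝ≥0∞) {q : ℝ} (hq : 1 ≤ q) : x ^ (q - 1) * x = x ^ q := by
  nth_rw 2 [← ENNReal.rpow_one x]
  rw [← ENNReal.rpow_add_of_nonneg _ _ (sub_nonneg.2 hq) zero_le_one, sub_add_cancel]

lemma lintegral_comp_lineMap_cond_le_rpow (hs : Convex ℝ s) (hsm : MeasurableSet s)
    [IsProbabilityMeasure μ[|s]] {p q : ℝ} (hp : 1 ≤ p) (hpq : p ≤ q) {x : E} (hx : x ∈ s) {l : ℝ}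
    (hl : 0 < l) (hl1 : l ≤ 1) {f : E → ℝ≥0∞} (hf : Measurable f) :
    ∫⁻ y, f (AffineMap.lineMap x y l) ∂μ[|s] ≤
      ENNReal.ofReal (l ^ (-(finrank ℝ E * (1 / p - 1 / q)))) *
        ((∫⁻ y, f y ^ p ∂μ[|s]) ^ (q / p - 1) *
          ∫⁻ y, f (AffineMap.lineMap x y l) ^ p ∂μ[|s]) ^ (1 / q) := by
  have hp0 : 0 < p := one_pos.trans_le hp
  have hq0 : 0 < q := hp0.trans_le hpq
  have hqp : 0 ≤ q / p - 1 := sub_nonneg.2 ((one_le_div hp0).2 hpq)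
  set A := ∫⁻ y, f (AffineMap.lineMap x y l) ^ p ∂μ[|s]
  set I := ∫⁻ y, f y ^ p ∂μ[|s]
  have hA : A ≤ ENNReal.ofReal (l ^ finrank ℝ E)⁻¹ * I :=
    lintegral_comp_lineMap_cond_le μ hs hsm hx hl hl1 (hf.pow_const p)
  have jensen : (∫⁻ y, f (AffineMap.lineMap x y l) ∂μ[|s]) ^ p ≤ A := by
    simpa using rpow_lintegral_mul_le (μ := μ[|s]) (w := 1)
      (f := fun y => f (AffineMap.lineMap x y l)) aemeasurable_const
      (hf.comp (by fun_prop)).aemeasurable hp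
  have hfactor : ENNReal.ofReal (l ^ finrank ℝ E)⁻¹ ^ ((q / p - 1) * (1 / q)) =
      ENNReal.ofReal (l ^ (-(finrank ℝ E * (1 / p - 1 / q)))) := by
    rw [ENNReal.ofReal_rpow_of_pos (by positivity), ← Real.rpow_natCast, ← Real.rpow_neg hl.le,
      ← Real.rpow_mul hl.le]
    congr 2
    field_simp
  calc ∫⁻ y, f (AffineMap.lineMap x y l) ∂μ[|s] ≤ A ^ (1 / p) := by
        rwa [one_div, ENNReal.le_rpow_inv_iff hp0]
    _ = (A ^ (q / p - 1) * A) ^ (1 / q) := by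
        rw [ennreal_rpow_sub_one_mul_self A ((one_le_div hp0).2 hpq), ← ENNReal.rpow_mul,
          div_mul_div_cancel₀' hq0.ne']
    _ ≤ ((ENNReal.ofReal (l ^ finrank ℝ E)⁻¹ * I) ^ (q / p - 1) * A) ^ (1 / q) := by gcongr
    _ = _ := by
        rw [ENNReal.mul_rpow_of_nonneg _ _ hqp, mul_assoc,
          ENNReal.mul_rpow_of_nonneg _ _ (by positivity), ← ENNReal.rpow_mul, hfactor]

/-- The map `f ↦ ∫₀¹ ⨍ f (x + l (y - x)) dy dl`, whose values at `|∇v|` control the oscillation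
of `v`; the average is with respect to a probability measure `ν`. -/
def segmentMean (ν : Measure E) (f : E → ℝ≥0∞) (x : E) : ℝ≥0∞ :=
  ∫⁻ l in Ioo (0 : ℝ) 1, ∫⁻ y, f (AffineMap.lineMap x y l) ∂ν

lemma measurable_segmentMean {ν : Measure E} [SFinite ν] {f : E → ℝ≥0∞} (hf : Measurable f) :
    Measurable (segmentMean ν f) := by
  refine Measurable.lintegral_prod_right' (f := fun z : E × ℝ =>
    ∫⁻ y, f (AffineMap.lineMap z.1 y z.2) ∂ν) ?_
  exact Measurable.lintegral_prod_right'
    (f := fun z : (E × ℝ) × E => f (AffineMap.lineMap z.1.1 z.2 z.1.2)) (by fun_prop)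

lemma segmentMean_rpow_le (hs : Convex ℝ s) (hsm : MeasurableSet s)
    [IsProbabilityMeasure μ[|s]] {p q : ℝ} (hp : 1 ≤ p) (hpq : p ≤ q)
    (hσ : finrank ℝ E * (1 / p - 1 / q) < 1) {f : E → ℝ≥0∞} (hf : Measurable f) {x : E}
    (hx : x ∈ s) :
    segmentMean μ[|s] f x ^ q ≤
      ENNReal.ofReal (1 - finrank ℝ E * (1 / p - 1 / q))⁻¹ ^ (q - 1) *
        ∫⁻ l in Ioo (0 : ℝ) 1, ENNReal.ofReal (l ^ (-(finrank ℝ E * (1 / p - 1 / q)))) *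
          ((∫⁻ y, f y ^ p ∂μ[|s]) ^ (q / p - 1) *
            ∫⁻ y, f (AffineMap.lineMap x y l) ^ p ∂μ[|s]) := by
  have hq : 1 ≤ q := hp.trans hpq
  have hq0 : 0 < q := one_pos.trans_le hq
  have hA : Measurable fun l : ℝ => ∫⁻ y, f (AffineMap.lineMap x y l) ^ p ∂μ[|s] :=
    Measurable.lintegral_prod_right'
      (f := fun z : ℝ × E => f (AffineMap.lineMap x z.2 z.1) ^ p) (by fun_prop)
  have hle : segmentMean μ[|s] f x ≤ ∫⁻ l in Ioo (0 : ℝ) 1, _ :=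
    setLIntegral_mono' measurableSet_Ioo fun l hl =>
      lintegral_comp_lineMap_cond_le_rpow μ hs hsm hp hpq hx hl.1 hl.2.le hf
  refine (ENNReal.rpow_le_rpow hle hq0.le).trans ?_
  refine (rpow_lintegral_mul_le (by fun_prop)
    ((hA.const_mul _).pow_const _).aemeasurable hq).trans_eq ?_
  simp only [lintegral_Ioo_rpow_neg hσ, ← ENNReal.rpow_mul, one_div_mul_cancel hq0.ne',
    ENNReal.rpow_one]

lemma lintegral_segmentMean_rpow_le (hs : Convex ℝ s) (hsm : MeasurableSet s)
    [IsProbabilityMeasure μ[|s]] {p q : ℝ} (hp : 1 ≤ p) (hpq : p ≤ q)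
    (hσ : finrank ℝ E * (1 / p - 1 / q) < 1) {f : E → ℝ≥0∞} (hf : Measurable f) :
    ∫⁻ x, segmentMean μ[|s] f x ^ q ∂μ[|s] ≤
      ENNReal.ofReal (1 - finrank ℝ E * (1 / p - 1 / q))⁻¹ ^ q * 2 ^ finrank ℝ E *
        (∫⁻ y, f y ^ p ∂μ[|s]) ^ (q / p) := by
  have hq : 1 ≤ q := hp.trans hpq
  have hqp : 1 ≤ q / p := (one_le_div (by positivity)).2 hpq
  set σ := finrank ℝ E * (1 / p - 1 / q)
  set W : ℝ≥0∞ := ENNReal.ofReal (1 - σ)⁻¹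
  set I := ∫⁻ y, f y ^ p ∂μ[|s]
  let A : E → ℝ → ℝ≥0∞ := fun x l => ∫⁻ y, f (AffineMap.lineMap x y l) ^ p ∂μ[|s]
  have hA : Measurable (Function.uncurry A) :=
    Measurable.lintegral_prod_right'
      (f := fun z : (E × ℝ) × E => f (AffineMap.lineMap z.1.1 z.2 z.1.2) ^ p) (by fun_prop)
  calc ∫⁻ x, segmentMean μ[|s] f x ^ q ∂μ[|s]
      ≤ ∫⁻ x, W ^ (q - 1) * (∫⁻ l in Ioo (0 : ℝ) 1,
          ENNReal.ofReal (l ^ (-σ)) * (I ^ (q / p - 1) * A x l)) ∂μ[|s] :=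
        lintegral_mono_ae <| by
          filter_upwards [ProbabilityTheory.ae_cond_mem hsm] with x hx
            using segmentMean_rpow_le μ hs hsm hp hpq hσ hf hx
    _ = W ^ (q - 1) * ∫⁻ l in Ioo (0 : ℝ) 1,
          ENNReal.ofReal (l ^ (-σ)) * (I ^ (q / p - 1) * ∫⁻ x, A x l ∂μ[|s]) := by
        rw [lintegral_const_mul _ (by fun_prop), lintegral_lintegral_swap (by fun_prop)]
        congr! 3 with l
        rw [lintegral_const_mul _ (by fun_prop), lintegral_const_mul _ (by fun_prop)]
    _ ≤ W ^ (q - 1) * ∫⁻ l in Ioo (0 : ℝ) 1,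
          ENNReal.ofReal (l ^ (-σ)) * (I ^ (q / p - 1) * (2 ^ finrank ℝ E * I)) := by
        gcongr 1
        refine setLIntegral_mono' measurableSet_Ioo fun l hl => ?_
        gcongr
        exact lintegral_lintegral_comp_lineMap_cond_le μ hs hsm hl.1.le hl.2.le (hf.pow_const p)
    _ = (W ^ (q - 1) * W) * 2 ^ finrank ℝ E * (I ^ (q / p - 1) * I) := by
        rw [lintegral_mul_const _ (by fun_prop), lintegral_Ioo_rpow_neg hσ]
        ring
    _ = W ^ q * 2 ^ finrank ℝ E * I ^ (q / p) := by
        rw [ennreal_rpow_sub_one_mul_self W hq, ennreal_rpow_sub_one_mul_self I hqp]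

lemma eLpNorm'_segmentMean_le (hs : Convex ℝ s) (hsm : MeasurableSet s)
    [IsProbabilityMeasure μ[|s]] {p q : ℝ} (hp : 1 ≤ p) (hpq : p ≤ q)
    (hσ : finrank ℝ E * (1 / p - 1 / q) < 1) {f : E → ℝ≥0∞} (hf : Measurable f) :
    eLpNorm' (segmentMean μ[|s] f) q μ[|s] ≤
      ENNReal.ofReal (1 - finrank ℝ E * (1 / p - 1 / q))⁻¹ * (2 ^ finrank ℝ E) ^ (1 / q) *
        eLpNorm' f p μ[|s] := by
  have hq0 : 0 < q := one_pos.trans_le (hp.trans hpq)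
  refine (ENNReal.rpow_le_rpow (lintegral_segmentMean_rpow_le μ hs hsm hp hpq hσ hf)
    (one_div_nonneg.2 hq0.le)).trans_eq ?_
  rw [ENNReal.mul_rpow_of_nonneg _ _ (by positivity),
    ENNReal.mul_rpow_of_nonneg _ _ (by positivity), ← ENNReal.rpow_mul, ← ENNReal.rpow_mul,
    mul_one_div_cancel hq0.ne', ENNReal.rpow_one, div_mul_div_cancel₀' hq0.ne']
  rfl

lemma enorm_sub_integral_le_segmentMean (hsm : MeasurableSet s) [IsProbabilityMeasure μ[|s]]
    {v : E → ℝ} {K : ℝ≥0} (hv : LipschitzWith K v) (hvi : Integrable v μ[|s]) {x : E}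
    (hx : x ∈ s) :
    ‖v x - ∫ y, v y ∂μ[|s]‖ₑ ≤
      ediam s * segmentMean μ[|s] (fun y => ‖fderiv ℝ v y‖ₑ) x := by
  have hg : Measurable fun y => ‖fderiv ℝ v y‖ₑ := (measurable_fderiv ℝ v).enorm
  have hvy : ∀ᵐ y ∂μ[|s], ‖v x - v y‖ₑ ≤
      ∫⁻ l in Ioo (0 : ℝ) 1, ‖fderiv ℝ v (AffineMap.lineMap x y l)‖ₑ * ediam s := by
    filter_upwards [ProbabilityTheory.ae_cond_mem hsm,
      ProbabilityTheory.cond_absolutelyContinuous.ae_le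
        (ae_enorm_sub_le_lintegral_enorm_fderiv_lineMap μ hv x)] with y hy hxy
    rw [enorm_sub_rev]
    refine hxy.trans ?_
    gcongr
    rw [← edist_eq_enorm_sub]
    exact edist_le_ediam_of_mem hy hx
  calc ‖v x - ∫ y, v y ∂μ[|s]‖ₑ = ‖∫ y, (v x - v y) ∂μ[|s]‖ₑ := by
        rw [integral_sub (integrable_const _) hvi]; simp
    _ ≤ ∫⁻ y, ‖v x - v y‖ₑ ∂μ[|s] := enorm_integral_le_lintegral_enorm _
    _ ≤ ∫⁻ y, (∫⁻ l in Ioo (0 : ℝ) 1,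
          ‖fderiv ℝ v (AffineMap.lineMap x y l)‖ₑ * ediam s) ∂μ[|s] := lintegral_mono_ae hvy
    _ = ediam s * segmentMean μ[|s] (fun y => ‖fderiv ℝ v y‖ₑ) x := by
        have hF : Measurable fun l : ℝ =>
            ∫⁻ y, ‖fderiv ℝ v (AffineMap.lineMap x y l)‖ₑ ∂μ[|s] :=
          Measurable.lintegral_prod_right'
            (f := fun z : ℝ × E => ‖fderiv ℝ v (AffineMap.lineMap x z.2 z.1)‖ₑ)
            (hg.comp (by fun_prop))
        rw [lintegral_lintegral_swap (by fun_prop), segmentMean, mul_comm,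
          ← lintegral_mul_const _ hF]
        exact lintegral_congr fun l => lintegral_mul_const _ (hg.comp (by fun_prop))

theorem eLpNorm'_sub_integral_le (hs : Convex ℝ s) (hsm : MeasurableSet s)
    [IsProbabilityMeasure μ[|s]] {p q : ℝ} (hp : 1 ≤ p) (hpq : p ≤ q)
    (hσ : finrank ℝ E * (1 / p - 1 / q) < 1) {v : E → ℝ} {K : ℝ≥0} (hv : LipschitzWith K v)
    (hvi : Integrable v μ[|s]) :
    eLpNorm' (fun x => v x - ∫ y, v y ∂μ[|s]) q μ[|s] ≤
      ediam s * (ENNReal.ofReal (1 - finrank ℝ E * (1 / p - 1 / q))⁻¹ *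
        (2 ^ finrank ℝ E) ^ (1 / q)) * eLpNorm' (fderiv ℝ v) p μ[|s] := by
  have hg : Measurable fun y => ‖fderiv ℝ v y‖ₑ := (measurable_fderiv ℝ v).enorm
  have hq0 : 0 < q := one_pos.trans_le (hp.trans hpq)
  calc eLpNorm' (fun x => v x - ∫ y, v y ∂μ[|s]) q μ[|s]
      ≤ ediam s * eLpNorm' (segmentMean μ[|s] fun y => ‖fderiv ℝ v y‖ₑ) q μ[|s] := by
        refine eLpNorm'_le_mul_eLpNorm'_of_ae_le_mul
          (measurable_segmentMean hg).aestronglyMeasurable ?_ hq0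
        filter_upwards [ProbabilityTheory.ae_cond_mem hsm] with x hx
          using enorm_sub_integral_le_segmentMean μ hsm hv hvi hx
    _ ≤ ediam s * (_ * eLpNorm' (fun y => ‖fderiv ℝ v y‖ₑ) p μ[|s]) := by
        gcongr
        exact eLpNorm'_segmentMean_le μ hs hsm hp hpq hσ hg
    _ = _ := by rw [← mul_assoc, eLpNorm'_enorm]

end Segments

/-! ### Averages over balls -/

lemma setAverage_eq_integral_cond {α F : Type*} [MeasurableSpace α] [NormedAddCommGroup F]
    [NormedSpace ℝ F] (μ : Measure α) (s : Set α) (f : α → F) :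
    ⨍ x in s, f x ∂μ = ∫ x, f x ∂μ[|s] := setAverage_eq' μ f s

lemma eLpNorm'_restrict_eq_mul_cond {α F : Type*} [MeasurableSpace α] [NormedAddCommGroup F]
    {μ : Measure α} {s : Set α} (hs : μ s ≠ 0) (hs' : μ s ≠ ∞) (f : α → F) {p : ℝ}
    (hp : 0 < p) :
    eLpNorm' f p (μ.restrict s) = μ s ^ (1 / p) * eLpNorm' f p μ[|s] := by
  rw [ProbabilityTheory.cond, ← eLpNorm'_smul_measure hp.le, smul_smul,
    ENNReal.mul_inv_cancel hs hs', one_smul]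

section UnitBall

variable {E : Type*} [NormedAddCommGroup E] [NormedSpace ℝ E] [MeasurableSpace E]

lemma measurableEmbedding_add_smul [BorelSpace E] (z : E) {r : ℝ} (hr : r ≠ 0) :
    MeasurableEmbedding fun x : E => z + r • x :=
  ((Homeomorph.smulOfNeZero r hr).trans (Homeomorph.addLeft z)).measurableEmbedding

variable [FiniteDimensional ℝ E] (μ : Measure E) [μ.IsAddHaarMeasure]

instance isProbabilityMeasure_cond_unitBall : IsProbabilityMeasure μ[|ball (0 : E) 1] :=
  ProbabilityTheory.cond_isProbabilityMeasure_of_finite (measure_ball_pos μ 0 one_pos).ne'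
    measure_ball_lt_top.ne

lemma integrable_cond_ball {F : E → ℝ} (hF : LocallyIntegrable F μ) (z : E) {r : ℝ} (hr : 0 < r) :
    Integrable F μ[|ball z r] :=
  ((hF.integrableOn_isCompact (isCompact_closedBall z r)).mono_set
    ball_subset_closedBall).smul_measure (ENNReal.inv_ne_top.2 (measure_ball_pos μ z hr).ne')

variable [BorelSpace E]

lemma map_add_smul_cond_ball (z : E) {r : ℝ} (hr : 0 < r) :
    (μ[|ball (0 : E) 1]).map (fun x => z + r • x) = μ[|ball z r] := by
  have hmeas : Measurable fun x : E => z + r • x := by fun_prop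
  have hpre : (fun x => z + r • x) ⁻¹' ball z r = ball (0 : E) 1 := by
    ext x
    simp [norm_smul, abs_of_pos hr, hr]
  have hscale : ∀ t, MeasurableSet t → μ ((fun x => z + r • x) ⁻¹' t) =
      ENNReal.ofReal |(r ^ finrank ℝ E)⁻¹| * μ t := fun t ht => by
    rw [← Measure.map_apply hmeas ht, map_add_smul_addHaar μ z hr.ne', Measure.smul_apply,
      smul_eq_mul]
  have hc : ENNReal.ofReal |(r ^ finrank ℝ E)⁻¹| ≠ 0 := by
    simp [hr.ne']
  ext t ht
  rw [Measure.map_apply hmeas ht, ProbabilityTheory.cond_apply measurableSet_ball,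
    ProbabilityTheory.cond_apply measurableSet_ball, ← hpre, ← preimage_inter,
    hscale _ measurableSet_ball, hscale _ (measurableSet_ball.inter ht),
    ENNReal.mul_inv (Or.inl hc) (Or.inl ENNReal.ofReal_ne_top), mul_mul_mul_comm,
    ENNReal.inv_mul_cancel hc ENNReal.ofReal_ne_top, one_mul]

lemma setAverage_ball_eq_integral_cond_unitBall (F : E → ℝ) (z : E) {r : ℝ} (hr : 0 < r) :
    ⨍ x in ball z r, F x ∂μ = ∫ x, F (z + r • x) ∂μ[|ball (0 : E) 1] := by
  rw [setAverage_eq_integral_cond, ← (measurableEmbedding_add_smul z hr.ne').integral_map,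
    map_add_smul_cond_ball μ z hr]

lemma integrableOn_unitBall_comp_add_smul {F : E → ℝ} (hF : LocallyIntegrable F μ) (z : E) {r : ℝ}
    (hr : 0 < r) : IntegrableOn (fun x => F (z + r • x)) (ball 0 1) μ := by
  have hi := integrable_cond_ball μ hF z hr
  rw [← map_add_smul_cond_ball μ z hr,
    (measurableEmbedding_add_smul z hr.ne').integrable_map_iff, ProbabilityTheory.cond,
    integrable_smul_measure (ENNReal.inv_ne_zero.2 measure_ball_lt_top.ne)
      (ENNReal.inv_ne_top.2 (measure_ball_pos μ 0 one_pos).ne')] at hi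
  exact hi

lemma exists_eLpNorm'_sub_integral_unitBall_le {p q : ℝ} (hp : 1 ≤ p) (hpq : p ≤ q)
    (hσ : finrank ℝ E * (1 / p - 1 / q) < 1) :
    ∃ C : ℝ≥0, ∀ (v : E → ℝ) (K : ℝ≥0), LipschitzWith K v →
      eLpNorm' (fun x => v x - ∫ y, v y ∂μ[|ball 0 1]) q μ[|ball 0 1] ≤
        C * eLpNorm' (fderiv ℝ v) p μ[|ball 0 1] := by
  have hfin : ediam (ball (0 : E) 1) * (ENNReal.ofReal (1 - finrank ℝ E * (1 / p - 1 / q))⁻¹ *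
      (2 ^ finrank ℝ E) ^ (1 / q)) ≠ ∞ := by
    have hq : 0 ≤ 1 / q := one_div_nonneg.2 (zero_le_one.trans (hp.trans hpq))
    exact ENNReal.mul_ne_top isBounded_ball.ediam_ne_top (ENNReal.mul_ne_top ENNReal.ofReal_ne_top
      (ENNReal.rpow_ne_top_of_nonneg hq (ENNReal.pow_ne_top ENNReal.ofNat_ne_top)))
  lift ediam (ball (0 : E) 1) * (ENNReal.ofReal (1 - finrank ℝ E * (1 / p - 1 / q))⁻¹ *
      (2 ^ finrank ℝ E) ^ (1 / q)) to ℝ≥0 using hfin with C hC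
  refine ⟨C, fun v K hv => ?_⟩
  rw [hC]
  exact eLpNorm'_sub_integral_le μ (convex_ball 0 1) measurableSet_ball hp hpq hσ hv
    (integrable_cond_ball μ hv.continuous.locallyIntegrable 0 one_pos)

end UnitBall

/-! ### Cutoffs and capacities -/

section Cutoff

lemma lipschitzOnWith_mul_of_abs_le {X : Type*} [PseudoMetricSpace X] {f g : X → ℝ} {s : Set X}
    {Kf Kg A B : ℝ≥0} (hf : LipschitzOnWith Kf f s) (hg : LipschitzOnWith Kg g s)
    (hfA : ∀ x ∈ s, |f x| ≤ A) (hgB : ∀ x ∈ s, |g x| ≤ B) :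
    LipschitzOnWith (A * Kg + B * Kf) (fun x => f x * g x) s := by
  refine LipschitzOnWith.of_dist_le_mul fun x hx y hy => ?_
  have hfxy := hf.dist_le_mul x hx y hy
  have hgxy := hg.dist_le_mul x hx y hy
  rw [Real.dist_eq] at hfxy hgxy ⊢
  calc |f x * g x - f y * g y| = |f x * (g x - g y) + g y * (f x - f y)| := by congr 1; ring
    _ ≤ |f x| * |g x - g y| + |g y| * |f x - f y| := by
        rw [← abs_mul, ← abs_mul]; exact abs_add_le _ _
    _ ≤ A * (Kg * dist x y) + B * (Kf * dist x y) := by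
        gcongr
        exacts [hfA x hx, hgB y hy]
    _ = _ := by push_cast; ring

variable {E : Type*} [NormedAddCommGroup E]

/-- The `2`-Lipschitz cutoff function equal to `1` on `closedBall 0 (1 / 2)` and to `0` outside
`ball 0 1`, used to localize test functions for the capacity in the unit ball. -/
def cutoff (x : E) : ℝ := max 0 (min 1 (2 * (1 - ‖x‖)))

lemma lipschitzWith_cutoff : LipschitzWith 2 (cutoff : E → ℝ) := by
  have h : LipschitzWith 2 fun x : E => 2 * (1 - ‖x‖) := by
    refine LipschitzWith.of_dist_le_mul fun x y => ?_
    rw [Real.dist_eq, dist_eq_norm, NNReal.coe_ofNat, ← mul_sub, sub_sub_sub_cancel_left, abs_mul,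
      abs_two, norm_sub_rev]
    gcongr
    exact abs_norm_sub_norm_le y x
  exact (h.const_min 1).const_max 0

lemma abs_cutoff_le_one (x : E) : |cutoff x| ≤ 1 := by
  rw [abs_of_nonneg (le_max_left _ _)]
  exact max_le zero_le_one (min_le_left _ _)

lemma cutoff_eq_one {x : E} (hx : x ∈ closedBall 0 (1 / 2)) : cutoff x = 1 := by
  rw [mem_closedBall_zero_iff] at hx
  rw [cutoff, min_eq_left (by linarith), max_eq_right zero_le_one]

lemma cutoff_eq_zero {x : E} (hx : x ∈ sphere 0 1) : cutoff x = 0 := by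
  simp [cutoff, mem_sphere_zero_iff_norm.1 hx]

variable [NormedSpace ℝ E] {f : E → ℝ} {K : ℝ≥0}

lemma enorm_fderiv_cutoff_mul_le {x : E} (hη : DifferentiableAt ℝ cutoff x)
    (hf : DifferentiableAt ℝ f x) :
    ‖fderiv ℝ (fun y => cutoff y * f y) x‖ₑ ≤ ‖fderiv ℝ f x‖ₑ + 2 * ‖f x‖ₑ := by
  have hη' : ‖fderiv ℝ cutoff x‖ ≤ 2 := norm_fderiv_le_of_lipschitz ℝ lipschitzWith_cutoff
  have hnorm : ‖fderiv ℝ (fun y => cutoff y * f y) x‖ ≤ ‖fderiv ℝ f x‖ + 2 * ‖f x‖ := by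
    rw [fderiv_fun_mul hη hf]
    calc _ ≤ ‖cutoff x • fderiv ℝ f x‖ + ‖f x • fderiv ℝ cutoff x‖ := norm_add_le _ _
      _ = |cutoff x| * ‖fderiv ℝ f x‖ + ‖fderiv ℝ cutoff x‖ * ‖f x‖ := by
          rw [norm_smul, norm_smul, Real.norm_eq_abs, mul_comm ‖f x‖]
      _ ≤ 1 * ‖fderiv ℝ f x‖ + 2 * ‖f x‖ := by
          gcongr
          exact abs_cutoff_le_one x
      _ = _ := by rw [one_mul]
  have := ENNReal.ofReal_le_ofReal hnorm
  rwa [ENNReal.ofReal_add (norm_nonneg _) (by positivity), ENNReal.ofReal_mul zero_le_two,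
    ofReal_norm, ofReal_norm, ofReal_norm, ENNReal.ofReal_ofNat] at this

variable [FiniteDimensional ℝ E]

lemma exists_lipschitzOnWith_cutoff_mul (hf : LipschitzWith K f) (r : ℝ) :
    ∃ L, LipschitzOnWith L (fun x => cutoff x * f x) (closedBall 0 r) := by
  obtain ⟨M, hM⟩ := (isCompact_closedBall (0 : E) r).exists_bound_of_continuousOn
    hf.continuous.continuousOn
  exact ⟨_, lipschitzOnWith_mul_of_abs_le lipschitzWith_cutoff.lipschitzOnWith hf.lipschitzOnWith
    (A := 1) (B := M.toNNReal) (fun x _ => abs_cutoff_le_one x)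
    fun x hx => (hM x hx).trans (Real.le_coe_toNNReal M)⟩

lemma eLpNorm'_fderiv_cutoff_mul_le [MeasurableSpace E] [BorelSpace E] {μ ν : Measure E}
    [μ.IsAddHaarMeasure] (hν : ν ≪ μ) (hf : LipschitzWith K f) {p : ℝ} (hp : 1 ≤ p) :
    eLpNorm' (fderiv ℝ fun x => cutoff x * f x) p ν ≤
      eLpNorm' (fderiv ℝ f) p ν + 2 * eLpNorm' f p ν := by
  have hp0 : 0 < p := one_pos.trans_le hp
  have hg : AEStronglyMeasurable (fun x => ‖fderiv ℝ f x‖ₑ) ν :=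
    (measurable_fderiv ℝ f).enorm.aestronglyMeasurable
  have hfm : AEStronglyMeasurable (fun x => 2 * ‖f x‖ₑ) ν :=
    (hf.continuous.measurable.enorm.const_mul 2).aestronglyMeasurable
  calc eLpNorm' (fderiv ℝ fun x => cutoff x * f x) p ν
      ≤ eLpNorm' ((fun x => ‖fderiv ℝ f x‖ₑ) + fun x => 2 * ‖f x‖ₑ) p ν := by
        refine eLpNorm'_mono_enorm_ae hp0.le (hν.ae_le ?_)
        filter_upwards [hf.ae_differentiableAt, lipschitzWith_cutoff.ae_differentiableAt]
          with x hfx hηx using enorm_fderiv_cutoff_mul_le hηx hfx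
    _ ≤ eLpNorm' (fun x => ‖fderiv ℝ f x‖ₑ) p ν + eLpNorm' (fun x => 2 * ‖f x‖ₑ) p ν :=
        eLpNorm'_add_le hg hfm hp
    _ ≤ eLpNorm' (fderiv ℝ f) p ν + 2 * eLpNorm' f p ν := by
        rw [eLpNorm'_enorm]
        gcongr
        exact eLpNorm'_le_mul_eLpNorm'_of_ae_le_mul hf.continuous.aestronglyMeasurable
          (ae_of_all _ fun x => le_rfl) hp0

end Cutoff

section Capacity

variable {n : ℕ} {p q : ℝ} {E O : Set (En n)} {w : En n → ℝ} {K : ℝ≥0}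

lemma gnorm_nonneg (w : En n → ℝ) (x : En n) : 0 ≤ gnorm w x := norm_nonneg _

lemma measurable_gnorm (w : En n → ℝ) : Measurable (gnorm w) := (measurable_fderiv ℝ w).norm

lemma gnorm_const_smul (t : ℝ) (w : En n → ℝ) (x : En n) :
    gnorm (t • w) x = |t| * gnorm w x := by
  rw [gnorm, fderiv_const_smul_field, Pi.smul_apply, norm_smul, Real.norm_eq_abs, gnorm]

lemma smul_mem_Adm (hw : w ∈ Adm E O 1) {t : ℝ} (ht : 0 ≤ t) : t • w ∈ Adm E O t := by
  obtain ⟨⟨K, hK⟩, hwE, hwO⟩ := hw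
  exact ⟨⟨_, (lipschitzWith_smul t).comp_lipschitzOnWith hK⟩,
    fun x hx => le_mul_of_one_le_right ht (hwE x hx), fun x hx => by simp [hwO x hx]⟩

lemma cutoff_mem_Adm (hE : E ⊆ closedBall 0 (1 / 2)) : cutoff ∈ Adm E (ball 0 1) 1 :=
  ⟨⟨2, lipschitzWith_cutoff.lipschitzOnWith⟩, fun _ hx => (cutoff_eq_one (hE hx)).ge,
    fun _ hx => cutoff_eq_zero (frontier_ball (0 : En n) one_ne_zero ▸ hx)⟩

lemma integrableOn_mul_gnorm_rpow {b : En n → ℝ} (hO : IsOpen O) (hb : IntegrableOn b O)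
    (hw : LipschitzOnWith K w O) {s : ℝ} (hs : 0 ≤ s) :
    IntegrableOn (fun x => b x * gnorm w x ^ s) O := by
  refine Integrable.mul_bdd (c := (K : ℝ) ^ s) hb
    ((measurable_gnorm w).pow_const s).aestronglyMeasurable ?_
  filter_upwards [ae_restrict_mem hO.measurableSet] with x hx
  rw [Real.norm_of_nonneg (Real.rpow_nonneg (gnorm_nonneg w x) s)]
  exact Real.rpow_le_rpow (gnorm_nonneg w x)
    (norm_fderiv_le_of_lipschitzOn ℝ (hO.mem_nhds hx) hw) hs

lemma aInfOn_nonneg {b : En n → ℝ} (hb : ∀ x, 0 ≤ b x) (O : Set (En n)) : 0 ≤ aInfOn b O :=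
  Real.sInf_nonneg (forall_mem_image.2 fun x _ => hb x)

lemma aSupOn_nonneg {b : En n → ℝ} (hb : ∀ x, 0 ≤ b x) (O : Set (En n)) : 0 ≤ aSupOn b O :=
  Real.sSup_nonneg (forall_mem_image.2 fun x _ => hb x)

lemma phi_div_phiMinus_nonneg {b : En n → ℝ} (hb : ∀ x, 0 ≤ b x) (O : Set (En n)) (p q : ℝ)
    {t s : ℝ} (ht : 0 ≤ t) (hs : 0 ≤ s) (x : En n) :
    0 ≤ phi b p q x s / phiMinus b p q O t := by
  have hbx := hb x
  have hbO := aInfOn_nonneg hb O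
  rw [phi, phiMinus]
  positivity

lemma phi_div_phiMinus_le {b : En n → ℝ} (hb : ∀ x, 0 ≤ b x) (O : Set (En n)) (p q : ℝ)
    {t s : ℝ} (ht : 0 < t) (hs : 0 ≤ s) (x : En n) :
    phi b p q x (t * s) / phiMinus b p q O t ≤ s ^ p + t ^ (q - p) * (b x * s ^ q) := by
  have hbx := hb x
  have hbO := aInfOn_nonneg hb O
  have htq : t ^ p * t ^ (q - p) = t ^ q := by rw [← Real.rpow_add ht, add_sub_cancel]
  have hden : t ^ p ≤ phiMinus b p q O t := le_add_of_nonneg_right (by positivity)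
  rw [div_le_iff₀ ((Real.rpow_pos_of_pos ht p).trans_le hden)]
  calc phi b p q x (t * s) = (s ^ p + t ^ (q - p) * (b x * s ^ q)) * t ^ p := by
        rw [phi, Real.mul_rpow ht.le hs, Real.mul_rpow ht.le hs, ← htq]; ring
    _ ≤ _ := by gcongr

lemma capPhiInf_le_integral {b : En n → ℝ} (hb : ∀ x, 0 ≤ b x) {t : ℝ} (ht : 0 < t)
    (hw : w ∈ Adm E O t) :
    capPhiInf b p q E O ≤ ∫ x in O, phi b p q x (gnorm w x) / phiMinus b p q O t := by
  have hlevel : ∀ s : Ioi (0 : ℝ), ∀ I ∈ (fun u => ∫ x in O,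
      phi b p q x (gnorm u x) / phiMinus b p q O s) '' Adm E O s, 0 ≤ I := fun s =>
    forall_mem_image.2 fun u _ =>
      integral_nonneg fun x => phi_div_phiMinus_nonneg hb O p q s.2.le (gnorm_nonneg u x) x
  exact (ciInf_le ⟨0, forall_mem_range.2 fun s => Real.sInf_nonneg (hlevel s)⟩
    (⟨t, ht⟩ : Ioi (0 : ℝ))).trans (csInf_le ⟨0, hlevel ⟨t, ht⟩⟩ (mem_image_of_mem _ hw))

lemma capPhiInf_le_integral_add {b : En n → ℝ} (hb : ∀ x, 0 ≤ b x) (hO : IsOpen O)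
    (hOfin : volume O ≠ ∞) (hbi : IntegrableOn b O) (hp : 0 ≤ p) (hq : 0 ≤ q)
    (hw : w ∈ Adm E O 1) {t : ℝ} (ht : 0 < t) :
    capPhiInf b p q E O ≤
      (∫ x in O, gnorm w x ^ p) + t ^ (q - p) * ∫ x in O, b x * gnorm w x ^ q := by
  obtain ⟨K, hK⟩ := hw.1
  have hwi : IntegrableOn (fun x => gnorm w x ^ p) O := by
    simpa using integrableOn_mul_gnorm_rpow hO (integrableOn_const (C := (1 : ℝ)) hOfin)
      (hK.mono subset_closure) hp
  have hbwi := (integrableOn_mul_gnorm_rpow hO hbi (hK.mono subset_closure) hq).const_mul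
    (t ^ (q - p))
  calc capPhiInf b p q E O
      ≤ ∫ x in O, phi b p q x (gnorm (t • w) x) / phiMinus b p q O t :=
        capPhiInf_le_integral hb ht (smul_mem_Adm hw ht.le)
    _ ≤ ∫ x in O, (gnorm w x ^ p + t ^ (q - p) * (b x * gnorm w x ^ q)) := by
        refine integral_mono_of_nonneg (ae_of_all _ fun x =>
          phi_div_phiMinus_nonneg hb O p q ht.le (gnorm_nonneg _ x) x) (hwi.add hbwi)
          (ae_of_all _ fun x => ?_)
        simp only [gnorm_const_smul, abs_of_pos ht]
        exact phi_div_phiMinus_le hb O p q ht (gnorm_nonneg w x) x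
    _ = _ := by rw [integral_add hwi hbwi, integral_const_mul]

lemma capPhiInf_le_capP {b : En n → ℝ} (hb : ∀ x, 0 ≤ b x) (hO : IsOpen O)
    (hOfin : volume O ≠ ∞) (hbi : IntegrableOn b O) (hp : 0 ≤ p) (hpq : p < q)
    (hE : (Adm E O 1).Nonempty) : capPhiInf b p q E O ≤ capP p E O := by
  refine le_csInf (hE.image _) (forall_mem_image.2 fun w hw => ?_)
  have hpow : Tendsto (fun t : ℝ => t ^ (q - p)) (𝓝[>] 0) (𝓝 0) := by
    have := (Real.continuousAt_rpow_const 0 (q - p) (Or.inr (sub_nonneg.2 hpq.le))).tendsto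
    rw [Real.zero_rpow (sub_pos.2 hpq).ne'] at this
    exact this.mono_left nhdsWithin_le_nhds
  have hlim : Tendsto (fun t : ℝ => (∫ x in O, gnorm w x ^ p) +
      t ^ (q - p) * ∫ x in O, b x * gnorm w x ^ q) (𝓝[>] 0) (𝓝 (∫ x in O, gnorm w x ^ p)) := by
    simpa using (hpow.mul_const _).const_add (∫ x in O, gnorm w x ^ p)
  refine ge_of_tendsto hlim ?_
  filter_upwards [self_mem_nhdsWithin] with t ht
    using capPhiInf_le_integral_add hb hO hOfin hbi hp (hp.trans hpq.le) hw ht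

lemma locUnifPFat_of_locUnifPhiFat {a : En n → ℝ} (ha : ∀ x, 0 ≤ a x)
    (hai : LocallyIntegrable a) (hp : 0 ≤ p) (hpq : p < q) {κ ro : ℝ}
    (hE : LocUnifPhiFat a p q E κ ro) : LocUnifPFat p E κ ro := fun z hz r hr hrro =>
  (hE z hz r hr hrro).trans (capPhiInf_le_capP (fun _ => ha _) isOpen_ball measure_ball_lt_top.ne
    (integrableOn_unitBall_comp_add_smul volume hai z hr) hp hpq
    ⟨cutoff, cutoff_mem_Adm fun _ hx => hx.1⟩)

lemma ofReal_capP_mul_le (hp : 0 < p) (hw : LipschitzOnWith K w (closure O)) {m : ℝ}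
    (hwE : ∀ x ∈ E, w x = m) (hwO : ∀ x ∈ frontier O, w x = 0) :
    ENNReal.ofReal (capP p E O) * ‖m‖ₑ ^ p ≤ ∫⁻ x in O, ‖fderiv ℝ w x‖ₑ ^ p := by
  obtain rfl | hm := eq_or_ne m 0
  · simp [hp]
  have hadm : m⁻¹ • w ∈ Adm E O 1 :=
    ⟨⟨_, (lipschitzWith_smul m⁻¹).comp_lipschitzOnWith hw⟩,
      fun x hx => by simp [hwE x hx, hm], fun x hx => by simp [hwO x hx]⟩
  have hcap : capP p E O ≤ ∫ x in O, gnorm (m⁻¹ • w) x ^ p :=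
    csInf_le ⟨0, forall_mem_image.2 fun u _ => integral_nonneg fun x =>
      Real.rpow_nonneg (gnorm_nonneg u x) p⟩ (mem_image_of_mem _ hadm)
  have hfd : ∀ x, ‖fderiv ℝ (m⁻¹ • w) x‖ₑ * ‖m‖ₑ = ‖fderiv ℝ w x‖ₑ := fun x => by
    rw [fderiv_const_smul_field, Pi.smul_apply, enorm_smul, mul_right_comm, ← enorm_mul,
      inv_mul_cancel₀ hm, enorm_one, one_mul]
  calc ENNReal.ofReal (capP p E O) * ‖m‖ₑ ^ p
      ≤ (∫⁻ x in O, ‖fderiv ℝ (m⁻¹ • w) x‖ₑ ^ p) * ‖m‖ₑ ^ p := by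
        gcongr
        refine (ENNReal.ofReal_le_ofReal hcap).trans ?_
        rw [integral_eq_lintegral_of_nonneg_ae
          (ae_of_all _ fun x => Real.rpow_nonneg (gnorm_nonneg _ x) p)
          ((measurable_gnorm _).pow_const p).aestronglyMeasurable]
        refine ENNReal.ofReal_toReal_le.trans_eq (lintegral_congr fun x => ?_)
        rw [← ENNReal.ofReal_rpow_of_nonneg (gnorm_nonneg _ x) hp.le, gnorm, ofReal_norm]
    _ = ∫⁻ x in O, ‖fderiv ℝ w x‖ₑ ^ p := by
        rw [← lintegral_mul_const _ ((measurable_fderiv ℝ _).enorm.pow_const p)]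
        exact lintegral_congr fun x => by rw [← ENNReal.mul_rpow_of_nonneg _ _ hp.le, hfd]

lemma ofReal_capP_rpow_mul_le_eLpNorm' (hp : 0 < p) (hw : LipschitzOnWith K w (closure O)) {m : ℝ}
    (hwE : ∀ x ∈ E, w x = m) (hwO : ∀ x ∈ frontier O, w x = 0) :
    ENNReal.ofReal (capP p E O) ^ (1 / p) * ‖m‖ₑ ≤
      eLpNorm' (fderiv ℝ w) p (volume.restrict O) := by
  have := ENNReal.rpow_le_rpow (ofReal_capP_mul_le hp hw hwE hwO) (one_div_nonneg.2 hp.le)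
  rwa [ENNReal.mul_rpow_of_nonneg _ _ (one_div_nonneg.2 hp.le), ← ENNReal.rpow_mul,
    mul_one_div_cancel hp.ne', ENNReal.rpow_one] at this

/-- Apply the definition of capacity to `cutoff * (v - m)`. -/
lemma ofReal_capP_rpow_mul_enorm_le {v : En n → ℝ} (hp : 1 ≤ p) (hE : E ⊆ closedBall 0 (1 / 2))
    (hv : LipschitzWith K v) (hvE : ∀ x ∈ E, v x = 0) (m : ℝ) :
    ENNReal.ofReal (capP p E (ball 0 1)) ^ (1 / p) * ‖m‖ₑ ≤
      volume (ball (0 : En n) 1) ^ (1 / p) * (eLpNorm' (fderiv ℝ v) p volume[|ball 0 1] +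
        2 * eLpNorm' (fun x => v x - m) p volume[|ball 0 1]) := by
  have hvm : LipschitzWith K fun x => v x - m := by
    simpa using hv.sub (LipschitzWith.const m)
  obtain ⟨L, hL⟩ := exists_lipschitzOnWith_cutoff_mul hvm 1
  have hcap := ofReal_capP_rpow_mul_le_eLpNorm' (O := ball 0 1) (m := -m) (one_pos.trans_le hp)
    (closure_ball (0 : En n) one_ne_zero ▸ hL)
    (fun x hx => by rw [cutoff_eq_one (hE hx), hvE x hx, one_mul, zero_sub])
    (fun x hx => by
      rw [cutoff_eq_zero (frontier_ball (0 : En n) one_ne_zero ▸ hx), zero_mul])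
  rw [enorm_neg, eLpNorm'_restrict_eq_mul_cond (measure_ball_pos volume (0 : En n) one_pos).ne'
    measure_ball_lt_top.ne _ (one_pos.trans_le hp)] at hcap
  refine hcap.trans ?_
  gcongr
  rw [← show fderiv ℝ (fun x => v x - m) = fderiv ℝ v from funext fun x => fderiv_sub_const m]
  exact eLpNorm'_fderiv_cutoff_mul_le ProbabilityTheory.cond_absolutelyContinuous hvm hp

lemma exists_enorm_le_of_le_capP (hp : 1 ≤ p) {κ : ℝ} (hκ : 0 < κ) :
    ∃ D : ℝ≥0, ∀ E ⊆ closedBall (0 : En n) (1 / 2), κ ≤ capP p E (ball 0 1) →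
      ∀ (v : En n → ℝ) (K : ℝ≥0), LipschitzWith K v → (∀ x ∈ E, v x = 0) → ∀ m : ℝ,
        ‖m‖ₑ ≤ D * (eLpNorm' (fderiv ℝ v) p volume[|ball 0 1] +
          2 * eLpNorm' (fun x => v x - m) p volume[|ball 0 1]) := by
  have hp0 : 0 < p := one_pos.trans_le hp
  have hV : volume (ball (0 : En n) 1) ^ (1 / p) ≠ ∞ :=
    ENNReal.rpow_ne_top_of_nonneg (one_div_nonneg.2 hp0.le) measure_ball_lt_top.ne
  have hκ0 : ENNReal.ofReal κ ^ (1 / p) ≠ 0 := by simp [hκ]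
  have hκtop : ENNReal.ofReal κ ^ (1 / p) ≠ ∞ :=
    ENNReal.rpow_ne_top_of_nonneg (one_div_nonneg.2 hp0.le) ENNReal.ofReal_ne_top
  refine ⟨(volume (ball (0 : En n) 1) ^ (1 / p) / ENNReal.ofReal κ ^ (1 / p)).toNNReal,
    fun E hE hκE v K hv hvE m => ?_⟩
  rw [ENNReal.coe_toNNReal (ENNReal.div_ne_top hV hκ0), ← ENNReal.mul_div_right_comm,
    ENNReal.le_div_iff_mul_le (Or.inl hκ0) (Or.inl hκtop), mul_comm]
  refine le_trans ?_ (ofReal_capP_rpow_mul_enorm_le hp hE hv hvE m)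
  gcongr

/-- On the unit ball, `v` differs from its mean `m` by at most the gradient in `L^q`, and `m` itself
is controlled because `v - m` equals the constant `-m` on a set of large capacity. -/
theorem exists_eLpNorm'_le_of_le_capP (hp : 1 ≤ p) (hpq : p ≤ q)
    (hσ : n * (1 / p - 1 / q) < 1) {κ : ℝ} (hκ : 0 < κ) :
    ∃ C : ℝ≥0, ∀ E ⊆ closedBall (0 : En n) (1 / 2), κ ≤ capP p E (ball 0 1) →
      ∀ (v : En n → ℝ) (K : ℝ≥0), LipschitzWith K v → (∀ x ∈ E, v x = 0) →
        eLpNorm' v q volume[|ball 0 1] ≤ C * eLpNorm' (fderiv ℝ v) p volume[|ball 0 1] := by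
  have hfr : finrank ℝ (En n) = n := finrank_euclideanSpace_fin
  obtain ⟨S, hS⟩ := exists_eLpNorm'_sub_integral_unitBall_le (volume : Measure (En n)) hp hpq
    (by rwa [hfr])
  obtain ⟨S', hS'⟩ := exists_eLpNorm'_sub_integral_unitBall_le (volume : Measure (En n)) hp le_rfl
    (by simp)
  obtain ⟨D, hD⟩ := exists_enorm_le_of_le_capP (n := n) hp hκ
  refine ⟨S + D * (1 + 2 * S'), fun E hE hκE v K hv hvE => ?_⟩
  set ν : Measure (En n) := volume[|ball 0 1]
  set m := ∫ x, v x ∂ν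
  set N := eLpNorm' (fderiv ℝ v) p ν
  have hvm : Continuous fun x => v x - m := hv.continuous.sub continuous_const
  calc eLpNorm' v q ν = eLpNorm' ((fun x => v x - m) + fun _ => m) q ν := by
        congr 1
        exact funext fun x => (sub_add_cancel (v x) m).symm
    _ ≤ eLpNorm' (fun x => v x - m) q ν + eLpNorm' (fun _ => m) q ν :=
        eLpNorm'_add_le hvm.aestronglyMeasurable aestronglyMeasurable_const (hp.trans hpq)
    _ ≤ S * N + D * (N + 2 * (S' * N)) := by
        rw [eLpNorm'_const_of_isProbabilityMeasure m (one_pos.trans_le (hp.trans hpq))]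
        gcongr
        · exact hS v K hv
        · refine (hD E hE hκE v K hv hvE m).trans ?_
          gcongr
          exact hS' v K hv
    _ = _ := by push_cast; ring

end Capacity

/-! ### The boundary Poincaré inequality -/

lemma integral_norm_rpow_eq_toReal_eLpNorm'_rpow {α F : Type*} [MeasurableSpace α]
    [NormedAddCommGroup F] {μ : Measure α} {f : α → F} (hf : AEStronglyMeasurable f μ) {p : ℝ}
    (hp : 0 < p) : ∫ x, ‖f x‖ ^ p ∂μ = (eLpNorm' f p μ).toReal ^ p := by
  rw [integral_eq_lintegral_of_nonneg_ae (ae_of_all _ fun x => by positivity)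
    (hf.norm.aemeasurable.pow_const p).aestronglyMeasurable, ENNReal.toReal_rpow,
    ← lintegral_rpow_enorm_eq_rpow_eLpNorm' hp]
  congr 1
  exact lintegral_congr fun x => by
    rw [← ENNReal.ofReal_rpow_of_nonneg (norm_nonneg _) hp.le, ofReal_norm]

lemma integral_norm_rpow_le_of_eLpNorm'_le {α F G : Type*} [MeasurableSpace α]
    [NormedAddCommGroup F] [NormedAddCommGroup G] {μ : Measure α} {f : α → F} {g : α → G}
    (hf : AEStronglyMeasurable f μ) (hg : AEStronglyMeasurable g μ) {p s : ℝ} (hp : 0 < p)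
    (hs : 0 < s) {C : ℝ≥0} (hgtop : eLpNorm' g p μ ≠ ∞)
    (h : eLpNorm' f s μ ≤ C * eLpNorm' g p μ) :
    ∫ x, ‖f x‖ ^ s ∂μ ≤ (C ^ s : ℝ≥0) * (∫ x, ‖g x‖ ^ p ∂μ) ^ (s / p) := by
  have hreal := ENNReal.toReal_mono (ENNReal.mul_ne_top ENNReal.coe_ne_top hgtop) h
  rw [ENNReal.toReal_mul, ENNReal.coe_toReal] at hreal
  rw [integral_norm_rpow_eq_toReal_eLpNorm'_rpow hf hs,
    integral_norm_rpow_eq_toReal_eLpNorm'_rpow hg hp, ← Real.rpow_mul ENNReal.toReal_nonneg,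
    mul_div_cancel₀ s hp.ne', NNReal.coe_rpow, ← Real.mul_rpow C.coe_nonneg ENNReal.toReal_nonneg]
  exact Real.rpow_le_rpow ENNReal.toReal_nonneg hreal hs.le

lemma eLpNorm'_fderiv_ne_top {E : Type*} [NormedAddCommGroup E] [NormedSpace ℝ E]
    [MeasurableSpace E] {μ : Measure E} [IsFiniteMeasure μ] {v : E → ℝ} {K : ℝ≥0}
    (hv : LipschitzWith K v) {p : ℝ} (hp : 0 < p) : eLpNorm' (fderiv ℝ v) p μ ≠ ∞ := by
  have hle : eLpNorm' (fderiv ℝ v) p μ ≤ eLpNorm' (fun _ => (K : ℝ)) p μ :=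
    eLpNorm'_mono_ae hp.le (ae_of_all _ fun x => by
      simpa using norm_fderiv_le_of_lipschitz ℝ hv (x₀ := x))
  refine ne_top_of_le_ne_top ?_ hle
  rw [eLpNorm'_const _ hp]
  exact ENNReal.mul_ne_top enorm_ne_top
    (ENNReal.rpow_ne_top_of_nonneg (one_div_nonneg.2 hp.le) (measure_ne_top μ univ))

lemma rpow_div_eq_rpow_one_div_rpow_sub_mul {x p q : ℝ} (hx : 0 ≤ x) (hp : 0 < p) (hq : 0 < q) :
    x ^ (q / p) = (x ^ (1 / p)) ^ (q - p) * x := by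
  obtain rfl | hx0 := hx.eq_or_lt
  · rw [Real.zero_rpow (div_pos hq hp).ne', mul_zero]
  · rw [← Real.rpow_mul hx, ← Real.rpow_add_one hx0.ne']
    congr 1
    field_simp
    ring

lemma continuous_of_abs_sub_le_dist_rpow {X : Type*} [PseudoMetricSpace X] {a : X → ℝ} {A α : ℝ}
    (hα : 0 < α) (h : ∀ x y, |a x - a y| ≤ A * dist x y ^ α) : Continuous a := by
  refine continuous_iff_continuousAt.2 fun y => tendsto_iff_dist_tendsto_zero.2 ?_
  refine squeeze_zero (fun _ => dist_nonneg) (fun x => h x y) ?_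
  have hc : Continuous fun x => A * dist x y ^ α :=
    continuous_const.mul ((continuous_id.dist continuous_const).rpow_const fun _ => Or.inr hα.le)
  simpa [Real.zero_rpow hα.ne'] using hc.tendsto y

section BoundaryPoincare

variable {n : ℕ} {p q : ℝ}

lemma gnorm_comp_add_smul (u : En n → ℝ) (z : En n) {r : ℝ} (hr : 0 ≤ r) (x : En n) :
    gnorm (fun x => u (z + r • x)) x = r * gnorm u (z + r • x) := by
  have h := fderiv_comp_smul (𝕜 := ℝ) (f := fun y => u (z + y)) (x := x) r
  rw [gnorm, h, fderiv_comp_add_left, norm_smul, Real.norm_of_nonneg hr, gnorm]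

theorem exists_setAverage_rpow_le_of_locUnifPFat {s κ : ℝ} (hp : 1 ≤ p) (hps : p ≤ s)
    (hσ : n * (1 / p - 1 / s) < 1) (hκ : 0 < κ) :
    ∃ C : ℝ≥0, ∀ (ro : ℝ) (E : Set (En n)), LocUnifPFat p E κ ro →
      ∀ z ∈ E, ∀ r : ℝ, 0 < r → r < ro →
        ∀ (u : En n → ℝ) (K : ℝ≥0), LipschitzWith K u → (∀ x ∈ E, u x = 0) →
          ⨍ x in ball z r, |u x| ^ s ≤ C * (⨍ x in ball z r, (r * gnorm u x) ^ p) ^ (s / p) := by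
  have hp0 : 0 < p := one_pos.trans_le hp
  obtain ⟨C, hC⟩ := exists_eLpNorm'_le_of_le_capP (n := n) hp hps hσ hκ
  refine ⟨C ^ s, fun ro E hE z hz r hr hrro u K hu huE => ?_⟩
  set v : En n → ℝ := fun x => u (z + r • x)
  have hv : LipschitzWith (K * ‖r‖₊) v :=
    hu.comp (by simpa using (LipschitzWith.const z).add (lipschitzWith_smul r))
  rw [setAverage_ball_eq_integral_cond_unitBall volume _ z hr,
    setAverage_ball_eq_integral_cond_unitBall volume _ z hr]
  simp only [← gnorm_comp_add_smul u z hr.le]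
  exact integral_norm_rpow_le_of_eLpNorm'_le hv.continuous.aestronglyMeasurable
    (measurable_fderiv ℝ v).aestronglyMeasurable hp0 (hp0.trans_le hps)
    (eLpNorm'_fderiv_ne_top hv hp0)
    (hC _ (fun x hx => hx.1) (hE z hz r hr hrro) v _ hv fun x hx => huE _ hx.2)

theorem boundary_poincare_of_fatness_general {κ : ℝ} (hp : 1 ≤ p) (hpq : p < q)
    (hσ : n * (1 / p - 1 / q) < 1) (hκ : 0 < κ) :
    ∃ c : ℝ, 0 < c ∧ ∀ (ro : ℝ) (a : En n → ℝ) (E : Set (En n)),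
      (∀ x, 0 ≤ a x) → LocallyIntegrable a → LocUnifPhiFat a p q E κ ro →
      ∀ z ∈ E, ∀ r b : ℝ, 0 < r → r < ro → 0 ≤ b →
        ∀ (u : En n → ℝ) (K : ℝ≥0), LipschitzWith K u → (∀ x ∈ E, u x = 0) →
          (⨍ x in ball z r, (|u x| ^ p + b * |u x| ^ q)) ≤
            c * (1 + b * ((⨍ x in ball z r, (r * gnorm u x) ^ p) ^ (1 / p)) ^ (q - p)) *
              ⨍ x in ball z r, (r * gnorm u x) ^ p := by
  have hp0 : 0 < p := one_pos.trans_le hp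
  have hq0 : 0 < q := hp0.trans hpq
  obtain ⟨C₁, hC₁⟩ := exists_setAverage_rpow_le_of_locUnifPFat (n := n) hp le_rfl (by simp) hκ
  obtain ⟨C₂, hC₂⟩ := exists_setAverage_rpow_le_of_locUnifPFat hp hpq.le hσ hκ
  refine ⟨C₁ + C₂ + 1, by positivity, fun ro a E ha hai hE z hz r b hr hrro hb u K hu huE => ?_⟩
  have hEp := locUnifPFat_of_locUnifPhiFat ha hai hp0.le hpq hE
  have hup := hC₁ ro E hEp z hz r hr hrro u K hu huE
  have huq := hC₂ ro E hEp z hz r hr hrro u K hu huE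
  set J := ⨍ x in ball z r, (r * gnorm u x) ^ p
  have hJ : 0 ≤ J :=
    integral_nonneg fun x => Real.rpow_nonneg (mul_nonneg hr.le (gnorm_nonneg u x)) p
  rw [div_self hp0.ne', Real.rpow_one] at hup
  rw [rpow_div_eq_rpow_one_div_rpow_sub_mul hJ hp0 hq0] at huq
  have hi : ∀ s : ℝ, 0 ≤ s → Integrable (fun x => |u x| ^ s) volume[|ball z r] := fun s hs =>
    integrable_cond_ball volume
      (hu.continuous.abs.rpow_const fun _ => Or.inr hs).locallyIntegrable z hr
  have hsum : ⨍ x in ball z r, (|u x| ^ p + b * |u x| ^ q) =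
      (⨍ x in ball z r, |u x| ^ p) + b * ⨍ x in ball z r, |u x| ^ q := by
    simp only [setAverage_eq_integral_cond]
    rw [integral_add (hi p hp0.le) ((hi q hq0.le).const_mul b), integral_const_mul]
  set T := (J ^ (1 / p)) ^ (q - p)
  calc _ ≤ C₁ * J + b * (C₂ * (T * J)) := by rw [hsum]; gcongr
    _ ≤ (C₁ + C₂ + 1) * J + b * ((C₁ + C₂ + 1) * (T * J)) := by
        gcongr
        · linarith [C₂.coe_nonneg]
        · linarith [C₁.coe_nonneg]
    _ = _ := by ring

lemma mul_one_div_sub_one_div_lt_one_of_div_le {α : ℝ} (hp : 1 < p) (hpq : p < q) (hα : α ≤ 1)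
    (h : q / p ≤ 1 + α / n) : n * (1 / p - 1 / q) < 1 := by
  obtain rfl | hn := n.eq_zero_or_pos
  · simp
  have hn' : (n : ℝ) ≠ 0 := Nat.cast_ne_zero.2 hn.ne'
  have hq : 1 < q := hp.trans hpq
  calc n * (1 / p - 1 / q) = n * (q / p - 1) / q := by field_simp
    _ ≤ n * (α / n) / q := by gcongr; linarith
    _ = α / q := by rw [mul_div_cancel₀ α hn']
    _ < 1 := by rw [div_lt_one (by linarith)]; linarith

end BoundaryPoincare

/-- **Boundary Poincaré inequality from fatness** (Theorem 1.9, (2) ⇒ (3)).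
If `ℝⁿ ∖ Ω` satisfies the local infimal `φ`-capacity density condition, then the
boundary Poincaré inequality holds for balls centered in `ℝⁿ ∖ Ω`, for either
consistent choice of `a^±_{y,R}`. -/
theorem boundary_poincare_of_fatness
    (n : ℕ) (hn : 0 < n) (p q cfat : ℝ)
    (hp : 1 < p) (hpq : p < q) (hcfat : 0 < cfat) :
    ∃ c : ℝ, 0 < c ∧
      ∀ (α A ro : ℝ) (a : En n → ℝ) (Ω : Set (En n)) (astar : En n → ℝ → ℝ),
        0 < α → α ≤ 1 → (∀ x, 0 ≤ a x) → 0 ≤ A →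
        (∀ x y, |a x - a y| ≤ A * dist x y ^ α) →
        q / p ≤ 1 + α / n →
        IsOpen Ω → 0 < ro → ro ≤ 1 →
        LocUnifPhiFat a p q Ωᶜ cfat ro →
        ((∀ y R, astar y R = aSupOn a (ball y R)) ∨
         (∀ y R, astar y R = aInfOn a (ball y R))) →
        ∀ z ∈ Ωᶜ, ∀ (y : En n) (r R : ℝ), 0 < r → r < ro → 0 < R →
          ∀ u ∈ Lip0 Ω,
            (⨍ x in ball z r, (|u x| ^ p + astar y R * |u x| ^ q)) ≤
              c * (1 + astar y R *
                    ((⨍ x in ball z r, (r * gnorm u x) ^ p) ^ (1 / p)) ^ (q - p)) *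
                (⨍ x in ball z r, (r * gnorm u x) ^ p) := by
  by_cases hσ : n * (1 / p - 1 / q) < 1
  swap
  · exact ⟨1, one_pos, fun α A ro a Ω astar _ hα _ _ _ hqα => absurd
      (mul_one_div_sub_one_div_lt_one_of_div_le hp hpq hα hqα) hσ⟩
  obtain ⟨c, hc, h⟩ := boundary_poincare_of_fatness_general hp.le hpq hσ hcfat
  refine ⟨c, hc, fun α A ro a Ω astar hα _ ha _ haα _ _ _ _ hfat hastar z hz y r R hr hrro _ u hu =>
    ?_⟩
  have hastar0 : 0 ≤ astar y R := by
    obtain hsup | hinf := hastar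
    · exact hsup y R ▸ aSupOn_nonneg ha _
    · exact hinf y R ▸ aInfOn_nonneg ha _
  obtain ⟨⟨K, hu⟩, -, hsupp⟩ := hu
  exact h ro a Ωᶜ ha (continuous_of_abs_sub_le_dist_rpow hα haα).locallyIntegrable hfat z hz r _ hr
    hrro hastar0 u K hu fun x hx => of_not_not fun hux => hx (hsupp (subset_tsupport u hux))
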